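/- If (r, α, κ) ∈ C_TA(p_{Y|X}, p_{Z|X}), then (r − β, α + β, κ + 2β) ∈ C_TA(p_{Y|X}, p_{Z|X}) for every nonnegative real number β < r. -/

import Mathlib

open scoped BigOperators Classical

noncomputable section

/-- A stochastic map (conditional probability distribution): for each `b`,
`p b ∈ P(A)` is a probability mass function on `A`. -/
def IsStochastic {B A : Type*} [Fintype A] (p : B → A → ℝ) : Prop :=
  (∀ b a, 0 ≤ p b a) ∧ ∀ b, ∑ a, p b a = 1

/-- The blocklength-`n` memoryless extension of a channel, acting componentwise. -/
def memExt {X Y : Type*} (W : X → Y → ℝ) (n : ℕ) : (Fin n → X) → (Fin n → Y) → ℝ :=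
  fun x y => ∏ i, W (x i) (y i)

/-- Shannon entropy (base 2) of a finitely supported pmf. -/
def ent {A : Type*} [Fintype A] (p : A → ℝ) : ℝ := -∑ a, p a * Real.logb 2 (p a)

variable {𝒳 𝒴 𝒵 : Type} [Fintype 𝒳] [Fintype 𝒴] [Fintype 𝒵]

/-- The joint pmf of (channel output, message, key) induced by a code:
the message `M` and the key `K` are independent and uniform, `Xⁿ ∼ f(·|M,K)`,
and the output is obtained through the memoryless extension of the channel `Ch`. -/
def pOut {M K 𝒪 : Type*} [Fintype M] [Fintype K] [Fintype 𝒳]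
    (Ch : 𝒳 → 𝒪 → ℝ) (n : ℕ) (f : M × K → (Fin n → 𝒳) → ℝ) :
    (Fin n → 𝒪) → M → K → ℝ :=
  fun o m k => ∑ x, ((Fintype.card M : ℝ))⁻¹ * ((Fintype.card K : ℝ))⁻¹ *
    f (m, k) x * memExt Ch n x o

/-- `(f, φ)` is an `(r, α, κ, δ, n)`-TA (typical authentication) code for the
DM-AIC`(Wc, Vc)`: the message rate `n⁻¹ log₂ |M|` is at least `r`, the key
consumption rate `n⁻¹ log₂ |K|` is at most `κ`, the probability of message error
is at most `δ`, and for every attack channel `ψ`, the probability (under the joint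
law of `(Zⁿ, M, K)`) that `−n⁻¹ log₂ ω_{f,φ}(Zⁿ,M,K) < α`, i.e. that
`ω_{f,φ}(Zⁿ,M,K) > 2^{−nα}`, is at most `δ`. -/
def IsTACode {M K : Type*} [Fintype M] [Fintype K]
    (Wc : 𝒳 → 𝒴 → ℝ) (Vc : 𝒳 → 𝒵 → ℝ) (r α κ δ : ℝ) (n : ℕ)
    (f : M × K → (Fin n → 𝒳) → ℝ)
    (φ : (Fin n → 𝒴) × K → Option M → ℝ) : Prop :=
  IsStochastic f ∧ IsStochastic φ ∧
  r ≤ Real.logb 2 (Fintype.card M) / n ∧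
  Real.logb 2 (Fintype.card K) / n ≤ κ ∧
  1 - (∑ y, ∑ m, ∑ k, pOut Wc n f y m k * φ (y, k) (some m)) ≤ δ ∧
  ∀ ψ : (Fin n → 𝒵) → (Fin n → 𝒴) → ℝ, IsStochastic ψ →
    (∑ z, ∑ m, ∑ k,
      (if (2 : ℝ) ^ (-(n : ℝ) * α) <
          ∑ y, ψ z y * ∑ m' ∈ Finset.univ.erase m, φ (y, k) (some m')
        then pOut Vc n f z m k else 0)) ≤ δ

/-- The typical authentication capacity region `C_TA(Wc, Vc)`: the set of triples
`(r, α, κ)` with `r > 0` such that for each blocklength `i ∈ ℤ⁺` there is an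
`(rᵢ, αᵢ, κᵢ, δᵢ, i)`-TA code with `(rᵢ, αᵢ, κᵢ, δᵢ) → (r, α, κ, 0)`. -/
def CTA (Wc : 𝒳 → 𝒴 → ℝ) (Vc : 𝒳 → 𝒵 → ℝ) : Set (ℝ × ℝ × ℝ) :=
  { t | 0 < t.1 ∧ ∃ rs αs κs ds : ℕ → ℝ,
      (∀ i : ℕ, 0 < i → ∃ (Mc Kc : ℕ) (f : Fin Mc × Fin Kc → (Fin i → 𝒳) → ℝ)
          (φ : (Fin i → 𝒴) × Fin Kc → Option (Fin Mc) → ℝ),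
          IsTACode Wc Vc (rs i) (αs i) (κs i) (ds i) i f φ) ∧
      Filter.Tendsto (fun i => (rs i, αs i, κs i, ds i)) Filter.atTop
        (nhds (t.1, t.2.1, t.2.2, 0)) }

/-! Each message `m` is protected by a tag `t = h a m + b`, where `h` is an almost Δ-universal
polynomial hash over `ZMod p` with `p ≈ 2 ^ (n * β)`, and where the seed `a` and the mask `b` are
fresh key material, costing `2 * β` in key rate. The pair `(m, t)` is sent as a message of the given
code, which costs `β` in message rate. A uniform mask makes `t` uniform whatever `m` and `a` are, so
the input of the given code stays uniform up to the rounding of `|M| / p`, and what the adversary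
observes carries no information on `a`. To deceive the receiver an attack must break the given code
and also guess the tag of a wrong message, which for a random seed has conditional probability at
most `L / p`, where `L` bounds the degree of the hash polynomials. Markov's inequality over `a`
turns this average into the typical exponent `α + β`. The crude converse `|M| ≤ 2 * |𝒴| ^ n` lets
`L` grow linearly in `n`, so all losses vanish in the limit. -/

section FiniteExpectation

variable {A B : Type*} [Fintype A] [Fintype B]

lemma expect_comp_le_of_injective [Nonempty A] {ι : A → B} (hι : Function.Injective ι) {c : ℝ}
    (hc : (Fintype.card B : ℝ) ≤ c * Fintype.card A) {F : B → ℝ} (hF : ∀ b, 0 ≤ F b) :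
    𝔼 a, F (ι a) ≤ c * 𝔼 b, F b := by
  have hA : (0 : ℝ) < Fintype.card A := by exact_mod_cast Fintype.card_pos
  have hB : (0 : ℝ) < Fintype.card B := by
    exact_mod_cast Fintype.card_pos.trans_le (Fintype.card_le_of_injective ι hι)
  have hsum : ∑ a, F (ι a) ≤ ∑ b, F b := by
    rw [← Finset.sum_image (f := F) (g := ι) hι.injOn]
    exact Finset.sum_le_univ_sum_of_nonneg hF
  have hF' : 0 ≤ ∑ b, F b := Finset.sum_nonneg fun b _ => hF b
  rw [Fintype.expect_eq_sum_div_card, Fintype.expect_eq_sum_div_card, mul_div_assoc',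
    div_le_div_iff₀ hA hB]
  calc (∑ a, F (ι a)) * Fintype.card B ≤ (∑ b, F b) * (c * Fintype.card A) := by gcongr
    _ = c * (∑ b, F b) * Fintype.card A := by ring

lemma expect_ite_lt_le_of_expect_le [Nonempty A] {X : A → ℝ} (hX : ∀ a, 0 ≤ X a)
    {c x θ θ' w : ℝ} (hc : 0 ≤ c) (hθ : 0 ≤ θ) (hθ' : 0 < θ') (hw : 0 ≤ w)
    (hmean : 𝔼 a, X a ≤ c * x) :
    𝔼 a, (if θ' < X a then w else 0) ≤ (if θ < x then w else 0) + c * (θ / θ') * w := by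
  split_ifs with hx
  · calc 𝔼 a, (if θ' < X a then w else 0) ≤ 𝔼 _a : A, w :=
          Finset.expect_le_expect fun a _ => by split_ifs <;> simp [hw]
      _ = w := Fintype.expect_const w
      _ ≤ w + c * (θ / θ') * w := le_add_of_nonneg_right (by positivity)
  · calc 𝔼 a, (if θ' < X a then w else 0) ≤ 𝔼 a, w / θ' * X a := by
          refine Finset.expect_le_expect fun a _ => ?_
          split_ifs with ha
          · rw [div_mul_eq_mul_div, le_div_iff₀ hθ']
            exact mul_le_mul_of_nonneg_left ha.le hw
          · exact mul_nonneg (by positivity) (hX a)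
      _ = w / θ' * 𝔼 a, X a := (Finset.mul_expect _ _ _).symm
      _ ≤ w / θ' * (c * θ) := by
          gcongr
          exact hmean.trans (mul_le_mul_of_nonneg_left (not_lt.1 hx) hc)
      _ = 0 + c * (θ / θ') * w := by ring

end FiniteExpectation

namespace IsStochastic

variable {A B C : Type*} [Fintype A] {p : B → A → ℝ}

lemma le_one (hp : IsStochastic p) (b : B) (a : A) : p b a ≤ 1 :=
  (Finset.single_le_sum (fun a _ => hp.1 b a) (Finset.mem_univ a)).trans_eq (hp.2 b)

lemma sum_some_le_one {p : B → Option A → ℝ} (hp : IsStochastic p) (b : B) :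
    ∑ a, p b (some a) ≤ 1 := by
  have hsum := hp.2 b
  rw [Fintype.sum_option] at hsum
  linarith [hp.1 b none]

lemma comp_left (hp : IsStochastic p) (g : C → B) : IsStochastic fun c => p (g c) :=
  ⟨fun c => hp.1 (g c), fun c => hp.2 (g c)⟩

lemma bind [Fintype B] {q : C → B → ℝ} (hq : IsStochastic q) (hp : IsStochastic p) :
    IsStochastic fun c a => ∑ b, q c b * p b a := by
  refine ⟨fun c a => Finset.sum_nonneg fun b _ => mul_nonneg (hq.1 c b) (hp.1 b a), fun c => ?_⟩
  rw [Finset.sum_comm]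
  simp only [← Finset.mul_sum, hp.2, mul_one, hq.2]

lemma memExt (hp : IsStochastic p) (n : ℕ) : IsStochastic (memExt p n) :=
  ⟨fun x _ => Finset.prod_nonneg fun i _ => hp.1 (x i) _, fun x => by
    simp only [_root_.memExt, ← Fintype.prod_sum, hp.2, Finset.prod_const_one]⟩

end IsStochastic

section Polynomial

open Polynomial

/-- An almost Δ-universal family of hash functions `M → T` with seeds in `S`: two distinct
messages have any prescribed difference of tags under at most `L` seeds. The usual `ε` is
`L / |S|`. -/
def IsAlmostDeltaUniversal {S M T : Type*} [Fintype S] [Sub T] (L : ℕ) (h : S → M → T) : Prop :=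
  ∀ ⦃m m' : M⦄, m' ≠ m → ∀ t, Finset.card {a | h a m' - h a m = t} ≤ L

/-- Polynomial evaluation hashing: the seed is the evaluation point. The factor `X` removes the
constant coefficient, which a difference of tags could not detect. -/
def polyHash {R M : Type*} [Semiring R] (c : M → R[X]) (a : R) (m : M) : R :=
  (X * c m).eval a

lemma isAlmostDeltaUniversal_polyHash {R M : Type*} [CommRing R] [IsDomain R] [Fintype R] {L : ℕ}
    {c : M → R[X]} (hc : Function.Injective c) (hdeg : ∀ m, c m ∈ degreeLT R L) :
    IsAlmostDeltaUniversal L (polyHash c) := by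
  intro m m' hne t
  set P : R[X] := X * (c m' - c m)
  have hdiff : c m' - c m ≠ 0 := sub_ne_zero.2 (hc.ne hne)
  have hPdeg : P.natDegree = (c m' - c m).natDegree + 1 := natDegree_X_mul hdiff
  have hPL : P.natDegree ≤ L := by
    have : (c m' - c m).natDegree < L := (natDegree_lt_iff_degree_lt hdiff).2
      (mem_degreeLT.1 (Submodule.sub_mem _ (hdeg m') (hdeg m)))
    lia
  have hPpos : 0 < P.degree := natDegree_pos_iff_degree_pos.1 (by lia)
  have hroots : ({a | polyHash c a m' - polyHash c a m = t} : Finset R)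
      ⊆ (P - C t).roots.toFinset := by
    intro a ha
    rw [Finset.mem_filter_univ] at ha
    have hne0 : P - C t ≠ 0 := fun h0 => by
      rw [sub_eq_zero.1 h0] at hPpos
      exact hPpos.not_ge degree_C_le
    rw [Multiset.mem_toFinset, mem_roots hne0, IsRoot.def]
    simpa [P, polyHash, mul_sub, sub_eq_zero] using ha
  calc _ ≤ (P - C t).roots.toFinset.card := Finset.card_le_card hroots
    _ ≤ Multiset.card (P - C t).roots := Multiset.toFinset_card_le _
    _ ≤ P.natDegree := card_roots_sub_C' hPpos
    _ ≤ L := hPL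

lemma exists_isAlmostDeltaUniversal (R : Type*) {M : Type*} [CommRing R] [IsDomain R] [Fintype R]
    [Fintype M] {L : ℕ} (hL : Fintype.card M ≤ Fintype.card R ^ L) :
    ∃ h : R → M → R, IsAlmostDeltaUniversal L h := by
  obtain ⟨c⟩ : Nonempty (M ↪ (Fin L → R)) :=
    Function.Embedding.nonempty_of_card_le (by simpa using hL)
  exact ⟨polyHash fun m => ((degreeLTEquiv R L).symm (c m) : R[X]),
    isAlmostDeltaUniversal_polyHash
      (Subtype.val_injective.comp ((degreeLTEquiv R L).symm.injective.comp c.injective))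
      fun m => Subtype.property _⟩

end Polynomial

section AlmostDeltaUniversal

variable {M M' S T : Type*} [Fintype S] [AddCommGroup T] {L : ℕ} {h : S → M' → T}

lemma IsAlmostDeltaUniversal.sum_sub_le [Fintype T] (hh : IsAlmostDeltaUniversal L h) {m m' : M'}
    (hne : m' ≠ m) {F : T → ℝ} (hF : ∀ t, 0 ≤ F t) :
    ∑ a, F (h a m' - h a m) ≤ L * ∑ t, F t := by
  rw [← Finset.sum_fiberwise' Finset.univ (fun a => h a m' - h a m) F, Finset.mul_sum]
  refine Finset.sum_le_sum fun t _ => ?_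
  rw [Finset.sum_const, nsmul_eq_mul]
  exact mul_le_mul_of_nonneg_right (by exact_mod_cast hh hne t) (hF t)

/-- The sum on the left runs over the messages an attacker can pass off for `m` when the receiver's
mask is `t - h a m`. -/
lemma IsAlmostDeltaUniversal.sum_erase_le [Fintype M] [Fintype M']
    (hh : IsAlmostDeltaUniversal L h) {ι : M' × T → M} (hι : Function.Injective ι) {F : M → ℝ}
    (hF : ∀ μ, 0 ≤ F μ) (m : M') (t : T) :
    ∑ a, ∑ m' ∈ Finset.univ.erase m, F (ι (m', h a m' + (t - h a m)))
      ≤ L * ∑ μ ∈ Finset.univ.erase (ι (m, t)), F μ := by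
  have : Fintype T := .ofInjective (fun t => ι (m, t)) (hι.comp (Prod.mk_right_injective m))
  have hsub : ((Finset.univ.erase m) ×ˢ (Finset.univ : Finset T)).image ι
      ⊆ Finset.univ.erase (ι (m, t)) := by
    intro μ hμ
    obtain ⟨⟨m', t'⟩, hmem, rfl⟩ := Finset.mem_image.1 hμ
    have hne : m' ≠ m := (Finset.mem_erase.1 (Finset.mem_product.1 hmem).1).1
    exact Finset.mem_erase.2
      ⟨fun heq => hne (congrArg Prod.fst (hι heq)), Finset.mem_univ _⟩
  calc ∑ a, ∑ m' ∈ Finset.univ.erase m, F (ι (m', h a m' + (t - h a m)))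
      = ∑ m' ∈ Finset.univ.erase m, ∑ a, F (ι (m', h a m' - h a m + t)) := by
        rw [Finset.sum_comm]
        simp only [add_sub_assoc', sub_add_eq_add_sub]
    _ ≤ ∑ m' ∈ Finset.univ.erase m, L * ∑ t', F (ι (m', t')) := by
        refine Finset.sum_le_sum fun m' hm' => ?_
        rw [← Equiv.sum_comp (Equiv.addRight t) fun t' => F (ι (m', t'))]
        exact hh.sum_sub_le (F := fun s => F (ι (m', s + t))) (Finset.ne_of_mem_erase hm')
          fun s => hF _
    _ = L * ∑ μ ∈ ((Finset.univ.erase m) ×ˢ Finset.univ).image ι, F μ := by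
        rw [Finset.sum_image hι.injOn, Finset.sum_product, Finset.mul_sum]
    _ ≤ L * ∑ μ ∈ Finset.univ.erase (ι (m, t)), F μ := by
        gcongr
        exact fun μ _ _ => hF μ

end AlmostDeltaUniversal

section FailureProbabilities

variable {M K Y Z : Type*}

/-- The probability that the decoder `φ` does not return the message of the message-key pair `q`,
when the legitimate channel output has law `P q`. -/
def missProb [Fintype Y] (P : M × K → Y → ℝ) (φ : Y × K → Option M → ℝ) (q : M × K) : ℝ :=
  1 - ∑ y, P q y * φ (y, q.2) (some q.1)

variable [Fintype M] [Fintype Y]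

/-- The quantity `ω_{f,φ}(z, m, k)` for `q = (m, k)`: the probability that the attack `ψ`, upon
observing `z`, makes the decoder accept a message other than `m`. -/
def spoofProb (φ : Y × K → Option M → ℝ) (ψ : Z → Y → ℝ) (q : M × K) (z : Z) : ℝ :=
  ∑ y, ψ z y * ∑ m' ∈ Finset.univ.erase q.1, φ (y, q.2) (some m')

/-- The probability that the adversary, whose observation has law `P q`, sees a `z` at which the
attack `ψ` succeeds with probability above `θ`. -/
def breachProb [Fintype Z] (P : M × K → Z → ℝ) (φ : Y × K → Option M → ℝ) (ψ : Z → Y → ℝ)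
    (θ : ℝ) (q : M × K) : ℝ :=
  ∑ z, if θ < spoofProb φ ψ q z then P q z else 0

lemma missProb_nonneg {P : M × K → Y → ℝ} {φ : Y × K → Option M → ℝ} (hP : IsStochastic P)
    (hφ : IsStochastic φ) (q : M × K) : 0 ≤ missProb P φ q :=
  sub_nonneg.2 <| (hP.2 q).le.trans' <| Finset.sum_le_sum fun y _ =>
    mul_le_of_le_one_right (hP.1 q y) (hφ.le_one _ _)

lemma spoofProb_nonneg {φ : Y × K → Option M → ℝ} {ψ : Z → Y → ℝ} (hφ : IsStochastic φ)
    (hψ : IsStochastic ψ) (q : M × K) (z : Z) : 0 ≤ spoofProb φ ψ q z :=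
  Finset.sum_nonneg fun y _ => mul_nonneg (hψ.1 z y) (Finset.sum_nonneg fun _ _ => hφ.1 _ _)

lemma breachProb_nonneg [Fintype Z] {P : M × K → Z → ℝ} (hP : IsStochastic P)
    (φ : Y × K → Option M → ℝ) (ψ : Z → Y → ℝ) (θ : ℝ) (q : M × K) :
    0 ≤ breachProb P φ ψ θ q :=
  Finset.sum_nonneg fun z _ => by split_ifs; exacts [hP.1 q z, le_rfl]

lemma sum_one_sub_missProb_le {P : M × K → Y → ℝ} {φ : Y × K → Option M → ℝ}
    (hP : IsStochastic P) (hφ : IsStochastic φ) (k : K) :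
    ∑ m, (1 - missProb P φ (m, k)) ≤ Fintype.card Y := by
  calc ∑ m, (1 - missProb P φ (m, k)) = ∑ y, ∑ m, P (m, k) y * φ (y, k) (some m) := by
        simp only [missProb, sub_sub_cancel]
        exact Finset.sum_comm
    _ ≤ ∑ _y : Y, 1 := by
        refine Finset.sum_le_sum fun y _ => (Finset.sum_le_sum fun m _ => ?_).trans
          (hφ.sum_some_le_one (y, k))
        exact mul_le_of_le_one_left (hφ.1 _ _) (hP.le_one _ _)
    _ = Fintype.card Y := by simp

lemma one_sub_expect_missProb_mul_card_le [Fintype K] [Nonempty M] [Nonempty K]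
    {P : M × K → Y → ℝ} {φ : Y × K → Option M → ℝ} (hP : IsStochastic P) (hφ : IsStochastic φ) :
    (1 - 𝔼 q, missProb P φ q) * Fintype.card M ≤ Fintype.card Y := by
  have hM : (0 : ℝ) < Fintype.card M := by exact_mod_cast Fintype.card_pos
  rw [← le_div_iff₀ hM]
  calc 1 - 𝔼 q, missProb P φ q = 𝔼 q, (1 - missProb P φ q) := by
        rw [Finset.expect_sub_distrib, Fintype.expect_const]
    _ = 𝔼 k, 𝔼 m, (1 - missProb P φ (m, k)) := by
        rw [← Finset.univ_product_univ, Finset.expect_product, Finset.expect_comm]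
    _ ≤ Fintype.card Y / Fintype.card M := by
        refine Finset.expect_le Finset.univ_nonempty fun k _ => ?_
        rw [Fintype.expect_eq_sum_div_card]
        gcongr
        exact sum_one_sub_missProb_le hP hφ k

end FailureProbabilities

section Codes

/-- The law of the blocklength-`n` output of the channel `C` when the input has law `f q`. -/
def outputLaw {B O : Type*} (C : 𝒳 → O → ℝ) (n : ℕ) (f : B → (Fin n → 𝒳) → ℝ) :
    B → (Fin n → O) → ℝ :=
  fun q o => ∑ x, f q x * memExt C n x o

lemma IsStochastic.outputLaw {B O : Type*} [Fintype O] {C : 𝒳 → O → ℝ} (hC : IsStochastic C)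
    {n : ℕ} {f : B → (Fin n → 𝒳) → ℝ} (hf : IsStochastic f) : IsStochastic (outputLaw C n f) :=
  hf.bind (hC.memExt n)

variable {M K K' : Type*} [Fintype M] [Fintype K] [Fintype K']

lemma sum_pOut_mul {O : Type*} [Fintype O] (C : 𝒳 → O → ℝ) (n : ℕ)
    (f : M × K → (Fin n → 𝒳) → ℝ) (g : M × K → (Fin n → O) → ℝ) :
    ∑ o, ∑ m, ∑ k, pOut C n f o m k * g (m, k) o
      = 𝔼 q, ∑ o, outputLaw C n f q o * g q o := by
  have hpOut (o m k) : pOut C n f o m k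
      = outputLaw C n f (m, k) o / Fintype.card (M × K) := by
    simp only [pOut, outputLaw, Finset.sum_div, Fintype.card_prod, Nat.cast_mul]
    exact Finset.sum_congr rfl fun x _ => by rw [div_eq_mul_inv, mul_inv]; ring
  simp only [hpOut, div_mul_eq_mul_div, ← Finset.sum_div, Fintype.expect_eq_sum_div_card]
  rw [Finset.sum_comm (s := (Finset.univ : Finset (M × K)))]
  simp only [Fintype.sum_prod_type]

variable {Wc : 𝒳 → 𝒴 → ℝ} {Vc : 𝒳 → 𝒵 → ℝ} {r α κ δ : ℝ} {n : ℕ}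
  {f : M × K → (Fin n → 𝒳) → ℝ} {φ : (Fin n → 𝒴) × K → Option M → ℝ}

lemma isTACode_iff [Nonempty M] [Nonempty K] :
    IsTACode Wc Vc r α κ δ n f φ ↔ IsStochastic f ∧ IsStochastic φ ∧
      r ≤ Real.logb 2 (Fintype.card M) / n ∧ Real.logb 2 (Fintype.card K) / n ≤ κ ∧
      𝔼 q, missProb (outputLaw Wc n f) φ q ≤ δ ∧
      ∀ ψ, IsStochastic ψ →
        𝔼 q, breachProb (outputLaw Vc n f) φ ψ ((2 : ℝ) ^ (-(n : ℝ) * α)) q ≤ δ := by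
  have hmiss : 1 - ∑ y, ∑ m, ∑ k, pOut Wc n f y m k * φ (y, k) (some m)
      = 𝔼 q, missProb (outputLaw Wc n f) φ q := by
    rw [sum_pOut_mul Wc n f fun q y => φ (y, q.2) (some q.1)]
    simp only [missProb, Finset.expect_sub_distrib, Fintype.expect_const]
  have hbreach (ψ : (Fin n → 𝒵) → (Fin n → 𝒴) → ℝ) (θ : ℝ) :
      ∑ z, ∑ m, ∑ k, (if θ < ∑ y, ψ z y * ∑ m' ∈ Finset.univ.erase m, φ (y, k) (some m')
        then pOut Vc n f z m k else 0) = 𝔼 q, breachProb (outputLaw Vc n f) φ ψ θ q := by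
    have hsum := sum_pOut_mul Vc n f fun q z => if θ < spoofProb φ ψ q z then 1 else 0
    simp only [mul_boole] at hsum
    exact hsum
  simp only [IsTACode, hmiss, hbreach]

lemma IsTACode.mono {r' κ' δ' : ℝ} (hcode : IsTACode Wc Vc r α κ δ n f φ) (hr : r' ≤ r)
    (hκ : κ ≤ κ') (hδ : δ ≤ δ') : IsTACode Wc Vc r' α κ' δ' n f φ := by
  obtain ⟨hf, hφ, hrate, hkey, herr, hsec⟩ := hcode
  exact ⟨hf, hφ, hr.trans hrate, hkey.trans hκ, herr.trans hδ, fun ψ hψ => (hsec ψ hψ).trans hδ⟩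

lemma IsTACode.nonempty (hcode : IsTACode Wc Vc r α κ δ n f φ) (hδ : δ < 1) :
    Nonempty (M × K) := by
  by_contra hempty
  rw [not_nonempty_iff] at hempty
  obtain ⟨-, -, -, -, herr, -⟩ := hcode
  rw [sum_pOut_mul Wc n f fun q y => φ (y, q.2) (some q.1), Finset.univ_eq_empty,
    Finset.expect_empty] at herr
  linarith

lemma IsTACode.card_message_le (hcode : IsTACode Wc Vc r α κ δ n f φ) (hWc : IsStochastic Wc)
    (hδ : δ < 1) : (1 - δ) * Fintype.card M ≤ (Fintype.card 𝒴 : ℝ) ^ n := by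
  obtain ⟨_, _⟩ := nonempty_prod.1 (hcode.nonempty hδ)
  obtain ⟨hf, hφ, -, -, herr, -⟩ := isTACode_iff.1 hcode
  calc (1 - δ) * Fintype.card M
      ≤ (1 - 𝔼 q, missProb (outputLaw Wc n f) φ q) * Fintype.card M := by gcongr
    _ ≤ Fintype.card (Fin n → 𝒴) := one_sub_expect_missProb_mul_card_le (hWc.outputLaw hf) hφ
    _ = (Fintype.card 𝒴 : ℝ) ^ n := by simp

lemma IsTACode.reindexKey [Nonempty M] [Nonempty K] (hcode : IsTACode Wc Vc r α κ δ n f φ)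
    (e : K' ≃ K) :
    IsTACode Wc Vc r α κ δ n (fun q => f (q.1, e q.2)) (fun v => φ (v.1, e v.2)) := by
  have : Nonempty K' := e.nonempty
  obtain ⟨hf, hφ, hr, hκ, hmiss, hbreach⟩ := isTACode_iff.1 hcode
  have hexpect (F : M × K → ℝ) : 𝔼 q : M × K', F (q.1, e q.2) = 𝔼 q, F q :=
    Fintype.expect_equiv ((Equiv.refl M).prodCongr e) _ _ fun _ => rfl
  exact isTACode_iff.2 ⟨hf.comp_left _, hφ.comp_left _, hr, by rwa [Fintype.card_congr e],
    (hexpect _).trans_le hmiss, fun ψ hψ => (hexpect _).trans_le (hbreach ψ hψ)⟩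

end Codes

section HashedCode

variable {M M' K S T A Y Z : Type*}

/-- The encoder of the hashed code. The key is a key `k` of the original code, a hash seed `a` and a
mask `b`; the message `m` is sent as the message of the original code with index `(m, t)`, where
`t = h a m + b` is its masked tag. -/
def hashEncoder [Add T] (ι : M' × T → M) (h : S → M' → T) (f : M × K → A) :
    M' × (K × S × T) → A :=
  fun q => f (ι (q.1, h q.2.2.1 q.1 + q.2.2.2), q.2.1)

/-- The decoder of the hashed code: it accepts a message exactly when it arrives with the masked
tag prescribed by the key. -/
def hashDecoder [Fintype M'] [Add T] (ι : M' × T → M) (h : S → M' → T) (φ : Y × K → Option M → ℝ) :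
    Y × (K × S × T) → Option M' → ℝ :=
  fun v o =>
    let accept (m : M') : ℝ := φ (v.1, v.2.1) (some (ι (m, h v.2.2.1 m + v.2.2.2)))
    o.elim (1 - ∑ m, accept m) accept

/-- For a fixed message and seed, a uniform mask amounts to a uniform tag. -/
def maskEquivTag [AddCommGroup T] (h : S → M' → T) :
    M' × (K × S × T) ≃ ((M' × T) × K) × S where
  toFun q := (((q.1, h q.2.2.1 q.1 + q.2.2.2), q.2.1), q.2.2.1)
  invFun u := (u.1.1.1, u.1.2, u.2, u.1.1.2 - h u.2 u.1.1.1)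
  left_inv q := by simp
  right_inv u := by simp

lemma IsStochastic.hashDecoder [Fintype M] [Fintype M'] [Add T] {ι : M' × T → M}
    (hι : Function.Injective ι) (h : S → M' → T) {φ : Y × K → Option M → ℝ}
    (hφ : IsStochastic φ) : IsStochastic (hashDecoder ι h φ) := by
  refine ⟨fun v o => ?_, fun v => by simp [_root_.hashDecoder, Fintype.sum_option]⟩
  cases o with
  | some m => exact hφ.1 _ _
  | none =>
    let g (m : M') : M := ι (m, h v.2.2.1 m + v.2.2.2)
    have hg : Function.Injective g := fun m₁ m₂ hm => congrArg Prod.fst (hι hm)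
    refine sub_nonneg.2 ((hφ.sum_some_le_one (v.1, v.2.1)).trans' ?_)
    rw [← Finset.sum_image (f := fun μ => φ (v.1, v.2.1) (some μ)) (g := g) hg.injOn]
    exact Finset.sum_le_univ_sum_of_nonneg fun μ => hφ.1 _ _

lemma expect_pair_comp_le [Fintype M] [Fintype M'] [Fintype T] [Fintype K] [Nonempty M']
    [Nonempty T] [Nonempty K] {ι : M' × T → M} (hι : Function.Injective ι) {c : ℝ}
    (hc : (Fintype.card M : ℝ) ≤ c * (Fintype.card M' * Fintype.card T)) {F : M × K → ℝ}
    (hF : ∀ q, 0 ≤ F q) :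
    𝔼 u : (M' × T) × K, F (ι u.1, u.2) ≤ c * 𝔼 q, F q := by
  refine expect_comp_le_of_injective (hι.prodMap Function.injective_id) ?_ hF
  simp only [Fintype.card_prod, Nat.cast_mul, ← mul_assoc] at hc ⊢
  gcongr

variable [AddCommGroup T] {ι : M' × T → M} {h : S → M' → T}

lemma expect_maskEquivTag [Fintype M'] [Fintype K] [Fintype S] [Fintype T] (h : S → M' → T)
    (F : M' × (K × S × T) → ℝ) :
    𝔼 q, F q = 𝔼 u, 𝔼 a, F ((maskEquivTag h).symm (u, a)) := by
  rw [← Finset.expect_product', Finset.univ_product_univ]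
  exact Fintype.expect_equiv (maskEquivTag h) _ _ fun q => by rw [Equiv.symm_apply_apply]

lemma hashEncoder_maskEquivTag_symm (f : M × K → A) (u : (M' × T) × K) (a : S) :
    hashEncoder ι h f ((maskEquivTag h).symm (u, a)) = f (ι u.1, u.2) := by
  simp [hashEncoder, maskEquivTag]

variable [Fintype M'] [Fintype Y] {φ : Y × K → Option M → ℝ}

lemma missProb_hash (P : M × K → Y → ℝ) (u : (M' × T) × K) (a : S) :
    missProb (hashEncoder ι h P) (hashDecoder ι h φ) ((maskEquivTag h).symm (u, a))
      = missProb P φ (ι u.1, u.2) := by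
  simp [missProb, hashEncoder, hashDecoder, maskEquivTag]

variable [Fintype M] [Fintype S] {ψ : Z → Y → ℝ} {L : ℕ}

lemma expect_spoofProb_hash_le (hh : IsAlmostDeltaUniversal L h) (hι : Function.Injective ι)
    (hφ : IsStochastic φ) (hψ : IsStochastic ψ) (u : (M' × T) × K) (z : Z) :
    𝔼 a, spoofProb (hashDecoder ι h φ) ψ ((maskEquivTag h).symm (u, a)) z
      ≤ L / Fintype.card S * spoofProb φ ψ (ι u.1, u.2) z := by
  obtain ⟨⟨m, t⟩, k⟩ := u
  rw [Fintype.expect_eq_sum_div_card, div_mul_eq_mul_div]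
  gcongr
  calc ∑ a, spoofProb (hashDecoder ι h φ) ψ ((maskEquivTag h).symm (((m, t), k), a)) z
      = ∑ y, ψ z y * ∑ a, ∑ m' ∈ Finset.univ.erase m,
          φ (y, k) (some (ι (m', h a m' + (t - h a m)))) := by
        simp only [Finset.mul_sum (Finset.univ : Finset S)]
        exact Finset.sum_comm
    _ ≤ ∑ y, ψ z y * (L * ∑ μ ∈ Finset.univ.erase (ι (m, t)), φ (y, k) (some μ)) := by
        gcongr with y
        · exact hψ.1 z y
        · exact hh.sum_erase_le hι (fun μ => hφ.1 (y, k) (some μ)) m t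
    _ = L * spoofProb φ ψ (ι (m, t), k) z := by
        simp only [spoofProb, Finset.mul_sum, mul_left_comm]

/-- Markov's inequality over the seed, at each observation where the original code resists the
attack. -/
lemma expect_breachProb_hash_le [Fintype Z] [Nonempty S] (hh : IsAlmostDeltaUniversal L h)
    (hι : Function.Injective ι) (hφ : IsStochastic φ) (hψ : IsStochastic ψ)
    {P : M × K → Z → ℝ} (hP : IsStochastic P) {θ θ' : ℝ} (hθ : 0 ≤ θ) (hθ' : 0 < θ')
    (u : (M' × T) × K) :
    𝔼 a, breachProb (hashEncoder ι h P) (hashDecoder ι h φ) ψ θ' ((maskEquivTag h).symm (u, a))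
      ≤ breachProb P φ ψ θ (ι u.1, u.2) + L / Fintype.card S * (θ / θ') := by
  let ω (a : S) (z : Z) : ℝ := spoofProb (hashDecoder ι h φ) ψ ((maskEquivTag h).symm (u, a)) z
  have hω (z : Z) (a : S) : 0 ≤ ω a z := spoofProb_nonneg (hφ.hashDecoder hι h) hψ _ z
  calc _ = ∑ z, 𝔼 a, (if θ' < ω a z then P (ι u.1, u.2) z else 0) := by
        simp only [breachProb, hashEncoder_maskEquivTag_symm]
        exact Finset.expect_sum_comm _ _ _
    _ ≤ ∑ z, ((if θ < spoofProb φ ψ (ι u.1, u.2) z then P (ι u.1, u.2) z else 0)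
          + L / Fintype.card S * (θ / θ') * P (ι u.1, u.2) z) :=
        Finset.sum_le_sum fun z _ => expect_ite_lt_le_of_expect_le (hω z) (by positivity) hθ hθ'
          (hP.1 _ z) (expect_spoofProb_hash_le hh hι hφ hψ u z)
    _ = _ := by
        rw [Finset.sum_add_distrib, ← Finset.mul_sum, hP.2, mul_one, breachProb]

end HashedCode

section Tradeoff

variable {M M' K S T : Type*} [Fintype M] [Fintype M'] [Fintype K] [Fintype S] [Fintype T]
  [AddCommGroup T] {Wc : 𝒳 → 𝒴 → ℝ} {Vc : 𝒳 → 𝒵 → ℝ} {r α κ δ : ℝ} {n : ℕ}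
  {f : M × K → (Fin n → 𝒳) → ℝ} {φ : (Fin n → 𝒴) × K → Option M → ℝ}

lemma IsTACode.hash [Nonempty M'] [Nonempty K] [Nonempty S]
    (hcode : IsTACode Wc Vc r α κ δ n f φ)
    (hWc : IsStochastic Wc) (hVc : IsStochastic Vc) {L : ℕ} {h : S → M' → T}
    (hh : IsAlmostDeltaUniversal L h) {ι : M' × T → M} (hι : Function.Injective ι) {c : ℝ}
    (hc : (Fintype.card M : ℝ) ≤ c * (Fintype.card M' * Fintype.card T)) (α' : ℝ) :
    IsTACode Wc Vc (Real.logb 2 (Fintype.card M') / n) α'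
      (Real.logb 2 (Fintype.card (K × S × T)) / n)
      (c * δ + L / Fintype.card S * (2 : ℝ) ^ (n * (α' - α))) n
      (hashEncoder ι h f) (hashDecoder ι h φ) := by
  have : Nonempty M := ⟨ι (Classical.arbitrary M', 0)⟩
  have hc0 : 0 ≤ c := nonneg_of_mul_nonneg_left ((Nat.cast_nonneg _).trans hc)
    (mul_pos (Nat.cast_pos.2 Fintype.card_pos) (Nat.cast_pos.2 Fintype.card_pos))
  obtain ⟨hf, hφ, -, -, hmiss, hbreach⟩ := isTACode_iff.1 hcode
  refine isTACode_iff.2 ⟨hf.comp_left _, hφ.hashDecoder hι h, le_rfl, le_rfl, ?_, fun ψ hψ => ?_⟩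
  · calc 𝔼 q, missProb (hashEncoder ι h (outputLaw Wc n f)) (hashDecoder ι h φ) q
        = 𝔼 u : (M' × T) × K, missProb (outputLaw Wc n f) φ (ι u.1, u.2) := by
          simp only [expect_maskEquivTag h, missProb_hash, Fintype.expect_const]
      _ ≤ c * 𝔼 q, missProb (outputLaw Wc n f) φ q :=
          expect_pair_comp_le hι hc fun q => missProb_nonneg (hWc.outputLaw hf) hφ q
      _ ≤ c * δ + L / Fintype.card S * (2 : ℝ) ^ (n * (α' - α)) :=
          (mul_le_mul_of_nonneg_left hmiss hc0).trans (le_add_of_nonneg_right (by positivity))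
  · set θ : ℝ := 2 ^ (-(n : ℝ) * α)
    set θ' : ℝ := 2 ^ (-(n : ℝ) * α')
    have hratio : θ / θ' = 2 ^ (n * (α' - α)) := by
      rw [← Real.rpow_sub two_pos]
      ring_nf
    have hP := hVc.outputLaw hf
    calc 𝔼 q, breachProb (hashEncoder ι h (outputLaw Vc n f)) (hashDecoder ι h φ) ψ θ' q
        ≤ 𝔼 u : (M' × T) × K, (breachProb (outputLaw Vc n f) φ ψ θ (ι u.1, u.2)
            + L / Fintype.card S * (θ / θ')) := by
          rw [expect_maskEquivTag h]
          exact Finset.expect_le_expect fun u _ => expect_breachProb_hash_le hh hι hφ hψ hP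
            (by positivity) (by positivity) u
      _ ≤ c * δ + L / Fintype.card S * 2 ^ (n * (α' - α)) := by
          rw [Finset.expect_add_distrib, Fintype.expect_const, hratio]
          gcongr
          exact (expect_pair_comp_le hι hc (breachProb_nonneg hP φ ψ θ)).trans
            (mul_le_mul_of_nonneg_left (hbreach ψ hψ) hc0)

/-- Some `(r, α, κ, δ, n)`-TA code exists, its messages and keys being numbered as in `CTA`. -/
def HasTACode (Wc : 𝒳 → 𝒴 → ℝ) (Vc : 𝒳 → 𝒵 → ℝ) (r α κ δ : ℝ) (n : ℕ) : Prop :=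
  ∃ (Mc Kc : ℕ) (f : Fin Mc × Fin Kc → (Fin n → 𝒳) → ℝ)
    (φ : (Fin n → 𝒴) × Fin Kc → Option (Fin Mc) → ℝ), IsTACode Wc Vc r α κ δ n f φ

lemma HasTACode.mono {Wc : 𝒳 → 𝒴 → ℝ} {Vc : 𝒳 → 𝒵 → ℝ} {r r' α κ κ' δ δ' : ℝ} {n : ℕ}
    (hcode : HasTACode Wc Vc r α κ δ n) (hr : r' ≤ r) (hκ : κ ≤ κ') (hδ : δ ≤ δ') :
    HasTACode Wc Vc r' α κ' δ' n :=
  let ⟨Mc, Kc, f, φ, hfφ⟩ := hcode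
  ⟨Mc, Kc, f, φ, hfφ.mono hr hκ hδ⟩

lemma le_two_mul_div_mul {N p : ℕ} (hp : 0 < p) (hpN : p ≤ N) : N ≤ 2 * (N / p * p) := by
  have hdiv := Nat.div_add_mod' N p
  have hmod := Nat.mod_lt N hp
  have hquot : 1 * p ≤ N / p * p := Nat.mul_le_mul_right _ (Nat.div_pos hpN hp)
  lia

lemma logb_two_sub_le_logb_div {N p : ℕ} (hp : 0 < p) (hpN : p ≤ N) :
    Real.logb 2 N - (Real.logb 2 p + 1) ≤ Real.logb 2 (N / p : ℕ) := by
  have hp0 : (0 : ℝ) < p := by exact_mod_cast hp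
  have hN0 : (0 : ℝ) < N := by exact_mod_cast hp.trans_le hpN
  have hQ0 : (0 : ℝ) < (N / p : ℕ) := by exact_mod_cast Nat.div_pos hpN hp
  rw [sub_le_iff_le_add]
  calc Real.logb 2 N ≤ Real.logb 2 (2 * ((N / p : ℕ) * p)) :=
        Real.logb_le_logb_of_le one_lt_two hN0 (by exact_mod_cast le_two_mul_div_mul hp hpN)
    _ = Real.logb 2 (N / p : ℕ) + (Real.logb 2 p + 1) := by
        rw [Real.logb_mul two_ne_zero (by positivity), Real.logb_mul hQ0.ne' hp0.ne',
          Real.logb_self_eq_one one_lt_two]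
        ring

lemma IsTACode.hasTACode_of_prime (hcode : IsTACode Wc Vc r α κ δ n f φ) (hδ : δ < 1)
    (hWc : IsStochastic Wc) (hVc : IsStochastic Vc) {p L : ℕ} (hp : p.Prime)
    (hpM : p ≤ Fintype.card M) (hL : Fintype.card M ≤ p ^ L) (α' : ℝ) :
    HasTACode Wc Vc (r - (Real.logb 2 p + 1) / n) α' (κ + 2 * Real.logb 2 p / n)
      (2 * δ + L / p * (2 : ℝ) ^ (n * (α' - α))) n := by
  obtain ⟨_, _⟩ := nonempty_prod.1 (hcode.nonempty hδ)
  have : Fact p.Prime := ⟨hp⟩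
  set Q := Fintype.card M / p
  have : Nonempty (Fin Q) := ⟨⟨0, Nat.div_pos hpM hp.pos⟩⟩
  obtain ⟨h, hh⟩ := exists_isAlmostDeltaUniversal (ZMod p) (M := Fin Q) (L := L)
    (by simpa using (Nat.div_le_self _ _).trans hL)
  obtain ⟨ι⟩ : Nonempty (Fin Q × ZMod p ↪ M) := Function.Embedding.nonempty_of_card_le
    (by simpa using Nat.div_mul_le_self _ _)
  have hMQ : (Fintype.card M : ℝ) ≤ 2 * (Q * p) := by
    exact_mod_cast le_two_mul_div_mul hp.pos hpM
  have hrate : r - (Real.logb 2 p + 1) / n ≤ Real.logb 2 (Fintype.card (Fin Q)) / n := by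
    calc r - (Real.logb 2 p + 1) / n
        ≤ (Real.logb 2 (Fintype.card M) - (Real.logb 2 p + 1)) / n := by
          rw [sub_div]
          exact sub_le_sub_right hcode.2.2.1 _
      _ ≤ Real.logb 2 (Fintype.card (Fin Q)) / n := by
          rw [Fintype.card_fin]
          gcongr
          exact logb_two_sub_le_logb_div hp.pos hpM
  have hkey : Real.logb 2 (Fintype.card (K × ZMod p × ZMod p)) / n
      ≤ κ + 2 * Real.logb 2 p / n := by
    have hK0 : (Fintype.card K : ℝ) ≠ 0 := by simp
    have hp0 : (p : ℝ) ≠ 0 := by simpa using hp.ne_zero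
    simp only [Fintype.card_prod, ZMod.card, Nat.cast_mul]
    rw [Real.logb_mul hK0 (mul_ne_zero hp0 hp0), Real.logb_mul hp0 hp0, ← two_mul, add_div]
    exact add_le_add_left hcode.2.2.2.1 _
  have hhash := hcode.hash hWc hVc hh ι.injective (by simpa using hMQ) α'
  exact ⟨Q, _, _, _, (hhash.mono hrate hkey (by rw [ZMod.card])).reindexKey
    (Fintype.equivFin (K × ZMod p × ZMod p)).symm⟩

lemma exists_prime_two_rpow_le {x : ℝ} (hx : 0 ≤ x) :
    ∃ p : ℕ, p.Prime ∧ (2 : ℝ) ^ x ≤ p ∧ Real.logb 2 p ≤ x + 2 := by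
  have hone : (1 : ℝ) ≤ 2 ^ x := Real.one_le_rpow one_le_two hx
  have hceil : ⌈(2 : ℝ) ^ x⌉₊ ≠ 0 := (Nat.ceil_pos.2 (by positivity)).ne'
  obtain ⟨p, hp, hlt, hle⟩ := Nat.exists_prime_lt_and_le_two_mul _ hceil
  refine ⟨p, hp, Nat.ceil_le.1 hlt.le, ?_⟩
  rw [Real.logb_le_iff_le_rpow one_lt_two (by exact_mod_cast hp.pos)]
  calc (p : ℝ) ≤ 2 * ⌈(2 : ℝ) ^ x⌉₊ := by exact_mod_cast hle
    _ ≤ 2 * (2 ^ x + 1) := by gcongr; exact (Nat.ceil_lt_add_one (by positivity)).le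
    _ ≤ 2 ^ x * 4 := by linarith
    _ = 2 ^ (x + 2) := by rw [Real.rpow_add two_pos]; norm_num

lemma IsTACode.card_message_le_two_pow (hcode : IsTACode Wc Vc r α κ δ n f φ)
    (hWc : IsStochastic Wc) (hδ : δ ≤ 1 / 2) (hn : 0 < n) :
    Fintype.card M ≤ 2 ^ (n * (Fintype.card 𝒴 + 1)) := by
  have hM : Fintype.card M ≤ 2 * Fintype.card 𝒴 ^ n := by
    have hconverse := hcode.card_message_le hWc (by linarith)
    have hhalf : 1 / 2 * (Fintype.card M : ℝ) ≤ (1 - δ) * Fintype.card M := by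
      gcongr
      linarith
    have : (Fintype.card M : ℝ) ≤ 2 * (Fintype.card 𝒴 : ℝ) ^ n := by linarith
    exact_mod_cast this
  calc Fintype.card M ≤ 2 * Fintype.card 𝒴 ^ n := hM
    _ ≤ 2 ^ n * (2 ^ Fintype.card 𝒴) ^ n := by
        gcongr
        · exact Nat.le_self_pow hn.ne' 2
        · exact Nat.lt_two_pow_self.le
    _ = 2 ^ (n * (Fintype.card 𝒴 + 1)) := by rw [← pow_mul, ← pow_add]; ring_nf

lemma IsTACode.hasTACode_sub_add (hcode : IsTACode Wc Vc r α κ δ n f φ) (hδ : δ < 1)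
    (hWc : IsStochastic Wc) (hVc : IsStochastic Vc) (hn : 0 < n) {β : ℝ} (hβ : 0 ≤ β)
    (hrβ : 2 ≤ n * (r - β)) {L : ℕ} (hL0 : 0 < L) (hL : Fintype.card M ≤ 2 ^ L) :
    HasTACode Wc Vc (r - β - 3 / n) (α + β - 2 * (Real.logb 2 L / n)) (κ + 2 * β + 4 / n)
      (2 * δ + 1 / L) n := by
  have := (nonempty_prod.1 (hcode.nonempty hδ)).1
  have hn' : (0 : ℝ) < n := by exact_mod_cast hn
  have hL' : (0 : ℝ) < L := by exact_mod_cast hL0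
  obtain ⟨p, hp, hβp, hlogp⟩ := exists_prime_two_rpow_le (x := n * β) (by positivity)
  have hp' : (0 : ℝ) < p := by exact_mod_cast hp.pos
  have hpM : p ≤ Fintype.card M := by
    have hlogM : r * n ≤ Real.logb 2 (Fintype.card M) := (le_div_iff₀ hn').1 hcode.2.2.1
    have : (p : ℝ) ≤ Fintype.card M :=
      (Real.logb_le_logb one_lt_two hp' (by exact_mod_cast Fintype.card_pos)).1 (by linarith)
    exact_mod_cast this
  refine (hcode.hasTACode_of_prime hδ hWc hVc hp hpM
    (hL.trans (Nat.pow_le_pow_left hp.two_le L)) _).mono ?_ ?_ ?_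
  · calc r - β - 3 / n = r - (n * β + 2 + 1) / n := by field_simp; ring
      _ ≤ r - (Real.logb 2 p + 1) / n := by gcongr
  · calc κ + 2 * Real.logb 2 p / n ≤ κ + 2 * (n * β + 2) / n := by gcongr
      _ = κ + 2 * β + 4 / n := by field_simp; ring
  · have hexponent : n * (α + β - 2 * (Real.logb 2 L / n) - α)
        = n * β - Real.logb 2 L * (2 : ℕ) := by
      field_simp
      push_cast
      ring
    rw [hexponent, Real.rpow_sub two_pos, Real.rpow_mul_natCast two_pos.le,
      Real.rpow_logb two_pos (by norm_num) hL']
    gcongr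
    calc (L : ℝ) / p * (2 ^ (n * β) / L ^ 2) ≤ (L : ℝ) / p * (p / L ^ 2) := by gcongr
      _ = (1 : ℝ) / L := by field_simp

end Tradeoff

open Filter Topology

lemma mem_CTA_iff {Wc : 𝒳 → 𝒴 → ℝ} {Vc : 𝒳 → 𝒵 → ℝ} {r α κ : ℝ} :
    (r, α, κ) ∈ CTA Wc Vc ↔ 0 < r ∧ ∃ rs αs κs ds : ℕ → ℝ,
      (∀ i, 0 < i → HasTACode Wc Vc (rs i) (αs i) (κs i) (ds i) i) ∧
      Tendsto rs atTop (𝓝 r) ∧ Tendsto αs atTop (𝓝 α) ∧ Tendsto κs atTop (𝓝 κ) ∧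
      Tendsto ds atTop (𝓝 0) := by
  simp only [CTA, Set.mem_ofPred_eq, HasTACode, Prod.tendsto_iff]

lemma mem_CTA_of_eventually_hasTACode {Wc : 𝒳 → 𝒴 → ℝ} {Vc : 𝒳 → 𝒵 → ℝ} {s : ℝ × ℝ × ℝ}
    (hs : s ∈ CTA Wc Vc) {r α κ : ℝ} (hr : 0 < r) {rs αs κs ds : ℕ → ℝ}
    (hcode : ∀ᶠ i in atTop, HasTACode Wc Vc (rs i) (αs i) (κs i) (ds i) i)
    (hrs : Tendsto rs atTop (𝓝 r)) (hαs : Tendsto αs atTop (𝓝 α))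
    (hκs : Tendsto κs atTop (𝓝 κ)) (hds : Tendsto ds atTop (𝓝 0)) :
    (r, α, κ) ∈ CTA Wc Vc := by
  obtain ⟨-, rs', αs', κs', ds', hcode', -⟩ := mem_CTA_iff.1 hs
  -- At the finitely many blocklengths without the required code, use the codes witnessing `hs`.
  let good (i : ℕ) : Prop := HasTACode Wc Vc (rs i) (αs i) (κs i) (ds i) i
  have patch {v w : ℕ → ℝ} {x : ℝ} (hv : Tendsto v atTop (𝓝 x)) :
      Tendsto (fun i => if good i then v i else w i) atTop (𝓝 x) :=
    hv.congr' (hcode.mono fun i hi => (if_pos hi).symm)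
  refine mem_CTA_iff.2 ⟨hr, fun i => if good i then rs i else rs' i,
    fun i => if good i then αs i else αs' i, fun i => if good i then κs i else κs' i,
    fun i => if good i then ds i else ds' i, fun i hi => ?_,
    patch hrs, patch hαs, patch hκs, patch hds⟩
  by_cases hgood : good i
  · simpa only [if_pos hgood] using hgood
  · simpa only [if_neg hgood] using hcode' i hi

lemma tendsto_logb_mul_div_atTop (b : ℝ) {A : ℝ} (hA : 0 < A) :
    Tendsto (fun i : ℕ => Real.logb b (i * A) / i) atTop (𝓝 0) := by
  have hlim : Tendsto (fun i : ℕ => (i : ℝ) * A) atTop atTop :=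
    tendsto_natCast_atTop_atTop.atTop_mul_const hA
  have hlog := (Real.isLittleO_log_id_atTop.tendsto_div_nhds_zero.comp hlim).mul_const
    (A / Real.log b)
  rw [zero_mul] at hlog
  refine hlog.congr fun i => ?_
  simp only [Function.comp, Real.logb, id]
  field_simp

/-- Theorem `lem:-t`: if `(r, α, κ) ∈ C_TA(p_{Y|X}, p_{Z|X})`, then
`(r − β, α + β, κ + 2β) ∈ C_TA(p_{Y|X}, p_{Z|X})` for every nonnegative `β < r`. -/
theorem statement1 {𝒳 𝒴 𝒵 : Type} [Fintype 𝒳] [Fintype 𝒴] [Fintype 𝒵]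
    (Wc : 𝒳 → 𝒴 → ℝ) (Vc : 𝒳 → 𝒵 → ℝ)
    (hWc : IsStochastic Wc) (hVc : IsStochastic Vc)
    (r α κ : ℝ) (h : (r, α, κ) ∈ CTA Wc Vc)
    (β : ℝ) (hβ0 : 0 ≤ β) (hβr : β < r) :
    (r - β, α + β, κ + 2 * β) ∈ CTA Wc Vc := by
  obtain ⟨-, rs, αs, κs, ds, hcode, hrs, hαs, hκs, hds⟩ := mem_CTA_iff.1 h
  have hnat : Tendsto (fun i : ℕ => (i : ℝ)) atTop atTop := tendsto_natCast_atTop_atTop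
  have hA : (0 : ℝ) < Fintype.card 𝒴 + 1 := by positivity
  have hgood : ∀ᶠ i : ℕ in atTop, 0 < i ∧ ds i ≤ 1 / 2 ∧ 2 ≤ i * (rs i - β) :=
    (eventually_gt_atTop 0).and ((hds.eventually_le_const (by norm_num)).and
      ((hnat.atTop_mul_pos (sub_pos.2 hβr) (hrs.sub_const β)).eventually_ge_atTop 2))
  refine mem_CTA_of_eventually_hasTACode h (sub_pos.2 hβr) (hgood.mono fun i hi => ?_)
    (by simpa using (hrs.sub_const β).sub (hnat.const_div_atTop 3))
    (by simpa using (hαs.add_const β).sub ((tendsto_logb_mul_div_atTop 2 hA).const_mul 2))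
    (by simpa using (hκs.add_const (2 * β)).add (hnat.const_div_atTop 4))
    (by simpa using (hds.const_mul 2).add ((hnat.atTop_mul_const hA).const_div_atTop 1))
  obtain ⟨hi0, hδ, hrβ⟩ := hi
  obtain ⟨Mc, Kc, f, φ, hfφ⟩ := hcode i hi0
  simpa using hfφ.hasTACode_sub_add (hδ.trans_lt (by norm_num)) hWc hVc hi0 hβ0 hrβ
    (by positivity) (hfφ.card_message_le_two_pow hWc hδ hi0)
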